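/- Let d ≥ 2, let A be a matrix with the Frolov lattice properties (1°) and (2°), and let r ≥ 2 be an integer. There exist constants c(d,A,r) > 0 and C(d,A,r) > 0 such that for any V ≥ V_0 := c(d,A,r) a^{-d} and every axis-parallel box B = ∏_{j=1}^d [x_j^0 - r u_j/2, x_j^0 + r u_j/2) ⊆ [0,1)^d with vol(B) = V, one has |Φ(a,A)(h^r_B) - ∫_{ℝ^d} h^r_B(x) dx| ≤ C(d,A,r) a^{-rd} (log(2V/V_0))^{d-1}, where log denotes the logarithm to base 2. -/

import Mathlib

/-!
By Poisson summation the cubature error equals the sum over `n ≠ 0` of the Fourier transform of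
`h^r_B` at the dual lattice points `a A n` (`poisson_box`). That lemma expands the periodization
of a continuous, compactly supported function in a multiple Fourier series on the torus; the
kernels are continuous because `r ≥ 2` (`hker_continuous`).

The kernel `h^r(·,u)` is an `r`-fold convolution of an interval indicator, so its Fourier
transform is the `r`-th power of that of the indicator (`hft_eq_pow`), hence at most
`min(u, 1/|k|)^r` at frequency `k` (`hft_one_le`). The error is therefore at most
`a^{-rd} ∑_{n ≠ 0} ∏_j min(a u_j, 1/|(A n)_j|)^r`.

Let `N = ∏ a u_j`, which is `V / V₀` once `c = r^d`, and sort the lattice points by the dyadic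
size `2^{s_j}` of `a u_j |(A n)_j|`, with `s_j ≥ 0`. The first lattice property excludes the boxes
with `2^{|s|} < N`; the second bounds the number of points in any other box by a multiple of
`2^{|s|}/N`, while each of its terms is at most a multiple of `(N/2^{|s|})^r`. As at most
`(k+1)^{d-1}` vectors `s` have `|s| = k`, the sum is dominated by
`∑_{2^k ≥ N} (k+1)^{d-1} N/2^k`, which is of order `(log₂ 2N)^{d-1}` (`lattice_sum_le`).
-/

open Matrix MeasureTheory

/-- The characteristic function `χ_{[-u/2,u/2)}`. -/
noncomputable def hk1 (u x : ℝ) : ℝ := if -(u / 2) ≤ x ∧ x < u / 2 then 1 else 0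

/-- The `r`-smooth kernel: `h¹(·,u) = χ_{[-u/2,u/2)}` and `h^r(·,u) = h^{r-1}(·,u) ∗ h¹(·,u)`. -/
noncomputable def hker : ℕ → ℝ → ℝ → ℝ
  | 0, _, _ => 0
  | 1, u, x => hk1 u x
  | r + 2, u, x => ∫ y : ℝ, hker (r + 1) u (x - y) * hk1 u y

/-! ### The smooth kernels and their Fourier transforms -/

lemma hk1_eq_indicator (u : ℝ) :
    hk1 u = (Set.Ico (-(u / 2)) (u / 2)).indicator (fun _ => (1 : ℝ)) := by
  funext x
  simp [hk1, Set.indicator_apply]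

lemma hk1_integrable (u : ℝ) : Integrable (hk1 u) := by
  rw [hk1_eq_indicator, integrable_indicator_iff measurableSet_Ico]
  exact integrableOn_const (by simp)

lemma hker_succ_eq_convolution (r : ℕ) (u : ℝ) :
    hker (r + 2) u = convolution (hk1 u) (hker (r + 1) u) (ContinuousLinearMap.mul ℝ ℝ) volume := by
  funext x
  rw [hker, convolution_def]
  simp [mul_comm]

lemma hker_integrable (r : ℕ) (u : ℝ) : Integrable (hker (r + 1) u) := by
  induction r with
  | zero =>
    have : hker (0 + 1) u = hk1 u := by funext x; rw [hker]
    rw [this]; exact hk1_integrable u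
  | succ r ih =>
    rw [hker_succ_eq_convolution]
    exact (hk1_integrable u).integrable_convolution _ ih

/-- From order two on the kernel is continuous: it is a difference of two values of a
primitive of the preceding kernel. -/
lemma hker_continuous (r : ℕ) (u : ℝ) (hu : 0 < u) : Continuous (hker (r + 2) u) := by
  have hi : ∀ a b, IntervalIntegrable (hker (r + 1) u) volume a b :=
    fun a b => (hker_integrable r u).intervalIntegrable
  have key : ∀ x, hker (r + 2) u x = (∫ t in (0 : ℝ)..(x + u / 2), hker (r + 1) u t)
      - ∫ t in (0 : ℝ)..(x - u / 2), hker (r + 1) u t := by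
    intro x
    rw [hker]
    have h1 : ∀ y, hker (r + 1) u (x - y) * hk1 u y
        = (Set.Ico (-(u / 2)) (u / 2)).indicator (fun y => hker (r + 1) u (x - y)) y := by
      intro y
      simp [hk1, Set.indicator_apply]
    simp_rw [h1]
    rw [integral_indicator measurableSet_Ico, integral_Ico_eq_integral_Ioc,
      ← intervalIntegral.integral_of_le (by linarith),
      intervalIntegral.integral_comp_sub_left (fun t => hker (r + 1) u t) x,
      intervalIntegral.integral_interval_sub_left (hi _ _) (hi _ _), sub_neg_eq_add]
  have hp := intervalIntegral.continuous_primitive hi 0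
  rw [show hker (r + 2) u = _ from funext key]
  exact (hp.comp (by fun_prop : Continuous fun x : ℝ => x + u / 2)).sub
    (hp.comp (by fun_prop : Continuous fun x : ℝ => x - u / 2))

/-- The support of the `r`-smooth kernel lies in `[-ru/2, ru/2]`. -/
lemma hker_eq_zero (r : ℕ) (u x : ℝ) (hx : (r + 1 : ℕ) * u / 2 < |x|) :
    hker (r + 1) u x = 0 := by
  induction r generalizing x with
  | zero =>
    rw [hker, hk1, if_neg]
    rintro ⟨h1, h2⟩
    have : |x| ≤ u / 2 := abs_le.2 ⟨h1, h2.le⟩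
    simp at hx
    linarith
  | succ r ih =>
    rw [hker]
    refine integral_eq_zero_of_ae (Filter.Eventually.of_forall fun y => ?_)
    by_cases hy : |y| ≤ u / 2
    · have : hker (r + 1) u (x - y) = 0 := by
        refine ih _ ?_
        have := abs_sub_abs_le_abs_sub x y
        push_cast at *
        linarith
      simp [this]
    · have : hk1 u y = 0 := by
        rw [hk1, if_neg]
        rintro ⟨h1, h2⟩
        exact hy (abs_le.2 ⟨h1, h2.le⟩)
      simp [this]

/-- The Fourier transform of the `r`-smooth kernel at frequency `k`. -/
noncomputable def hft (r : ℕ) (u k : ℝ) : ℂ :=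
  ∫ x : ℝ, Complex.exp (-(2 * Real.pi * Complex.I * k * x)) * (hker r u x : ℂ)

lemma norm_char (k x : ℝ) : ‖Complex.exp (-(2 * Real.pi * Complex.I * k * x))‖ = 1 := by
  rw [show -(2 * Real.pi * Complex.I * k * x : ℂ) = ((-(2 * Real.pi * k * x) : ℝ) : ℂ) * Complex.I by
    push_cast; ring]
  exact Complex.norm_exp_ofReal_mul_I _

lemma char_mul_integrable (k : ℝ) (h : ℝ → ℝ) (hh : Integrable h) :
    Integrable fun x : ℝ => Complex.exp (-(2 * Real.pi * Complex.I * k * x)) * (h x : ℂ) := by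
  refine hh.ofReal.bdd_mul (c := 1) ?_ ?_
  · exact (by fun_prop : Continuous fun x : ℝ =>
      Complex.exp (-(2 * Real.pi * Complex.I * k * x))).aestronglyMeasurable
  · exact Filter.Eventually.of_forall fun x => (norm_char k x).le

/-- The bound `|sin(π k u) / (π k)| ≤ min(u, 1/|k|)`, in a form that is also meaningful at
`k = 0`. -/
lemma hft_one_le (u k : ℝ) (hu : 0 < u) : ‖hft 1 u k‖ ≤ u ∧ ‖hft 1 u k‖ * |k| ≤ 1 := by
  have e : hft 1 u k = ∫ x in (-(u / 2))..(u / 2),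
      Complex.exp (-(2 * Real.pi * Complex.I * k) * x) := by
    rw [hft, intervalIntegral.integral_of_le (by linarith), ← integral_Ico_eq_integral_Ioc,
      ← integral_indicator measurableSet_Ico]
    refine integral_congr_ae (Filter.Eventually.of_forall fun x => ?_)
    simp only [hker, hk1, Set.indicator_apply, Set.mem_Ico]
    split_ifs <;> simp
  constructor
  · rw [e]
    refine (intervalIntegral.norm_integral_le_of_norm_le_const (C := 1) fun x _ => ?_).trans ?_
    · rw [neg_mul, norm_char]
    · rw [sub_neg_eq_add, add_halves, abs_of_pos hu, one_mul]
  · rcases eq_or_ne k 0 with rfl | hk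
    · simp
    have hc : (-(2 * Real.pi * Complex.I * k) : ℂ) ≠ 0 := by
      simp [hk, Real.pi_ne_zero]
    rw [e, integral_exp_mul_complex hc, norm_div]
    have hn : ‖(-(2 * Real.pi * Complex.I * k) : ℂ)‖ = 2 * Real.pi * |k| := by
      simp [abs_of_pos Real.pi_pos]
    rw [hn]
    have h2 : ‖Complex.exp (-(2 * Real.pi * Complex.I * k) * ((u / 2 : ℝ) : ℂ)) -
        Complex.exp (-(2 * Real.pi * Complex.I * k) * ((-(u / 2) : ℝ) : ℂ))‖ ≤ 2 := by
      refine (norm_sub_le _ _).trans ?_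
      rw [neg_mul, neg_mul, norm_char, norm_char]; norm_num
    have hk' := abs_pos.2 hk
    have hpi := Real.pi_gt_three
    rw [div_mul_eq_mul_div, div_le_one (by positivity)]
    nlinarith

lemma hft_succ (r : ℕ) (u k : ℝ) : hft (r + 2) u k = hft 1 u k * hft (r + 1) u k := by
  have h1 : hker 1 u = hk1 u := by funext x; rw [hker]
  have := integral_convolution (μ := volume) (ν := volume) (ContinuousLinearMap.mul ℂ ℂ)
    (char_mul_integrable k _ (hk1_integrable u)) (char_mul_integrable k _ (hker_integrable r u))
  rw [ContinuousLinearMap.mul_apply'] at this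
  rw [hft, hft, hft, h1, ← this]
  refine integral_congr_ae (Filter.Eventually.of_forall fun x => ?_)
  simp only [convolution_def, ContinuousLinearMap.mul_apply']
  rw [hker, ← integral_complex_ofReal, ← integral_const_mul]
  refine integral_congr_ae (Filter.Eventually.of_forall fun y => ?_)
  simp only
  have : Complex.exp (-(2 * Real.pi * Complex.I * k * x))
      = Complex.exp (-(2 * Real.pi * Complex.I * k * y))
        * Complex.exp (-(2 * Real.pi * Complex.I * k * ((x - y : ℝ) : ℂ))) := by
    rw [← Complex.exp_add]; congr 1; push_cast; ring
  rw [this]; push_cast; ring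

lemma hft_eq_pow (r : ℕ) (u k : ℝ) : hft (r + 1) u k = hft 1 u k ^ (r + 1) := by
  induction r with
  | zero => simp
  | succ r ih => rw [hft_succ, ih]; ring

/-! ### Poisson summation on `ℤ^d` -/

/-- The vector of reals underlying an integer vector. -/
def zvec {d : ℕ} (m : Fin d → ℤ) : Fin d → ℝ := fun i => (m i : ℝ)

/-- The half-open unit cube `∏ (m_j, m_j + 1]`. -/
def zcube {d : ℕ} (m : Fin d → ℤ) : Set (Fin d → ℝ) :=
  {x | ∀ i, x i ∈ Set.Ioc (m i : ℝ) (m i + 1)}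

/-- The character `x ↦ exp(-2πi ⟨n, x⟩)`. -/
noncomputable def chr {d : ℕ} (n : Fin d → ℤ) (x : Fin d → ℝ) : ℂ :=
  Complex.exp (-(2 * Real.pi * Complex.I * ((∑ j, (n j : ℝ) * x j : ℝ) : ℂ)))

lemma chr_continuous {d : ℕ} (n : Fin d → ℤ) : Continuous (chr n) := by
  unfold chr; fun_prop

lemma chr_add {d : ℕ} (n m : Fin d → ℤ) (x : Fin d → ℝ) : chr n (x + zvec m) = chr n x := by
  unfold chr
  have : -(2 * Real.pi * Complex.I * ((∑ j, (n j : ℝ) * (x + zvec m) j : ℝ) : ℂ))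
      = -(2 * Real.pi * Complex.I * ((∑ j, (n j : ℝ) * x j : ℝ) : ℂ))
        + ((-∑ j, n j * m j : ℤ) : ℂ) * (2 * Real.pi * Complex.I) := by
    simp only [Pi.add_apply, zvec, mul_add, Finset.sum_add_distrib]
    push_cast
    ring
  rw [this, Complex.exp_add, Complex.exp_int_mul_two_pi_mul_I, mul_one]

lemma mFourier_neg_coe {d : ℕ} (n : Fin d → ℤ) (x : Fin d → ℝ) :
    UnitAddTorus.mFourier (-n) (fun i => (x i : UnitAddCircle)) = chr n x := by
  simp only [UnitAddTorus.mFourier, ContinuousMap.coe_mk, fourier_coe_apply, chr]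
  rw [← Complex.exp_sum]
  congr 1
  push_cast
  rw [Finset.mul_sum, ← Finset.sum_neg_distrib]
  refine Finset.sum_congr rfl fun j _ => ?_
  simp
  ring

lemma zcube_measurable {d : ℕ} (m : Fin d → ℤ) : MeasurableSet (zcube m) := by
  have : zcube m = Set.univ.pi fun i => Set.Ioc (m i : ℝ) (m i + 1) := by
    ext; simp [zcube]
  rw [this]
  exact MeasurableSet.univ_pi fun i => measurableSet_Ioc

lemma mem_zcube_iff {d : ℕ} (m : Fin d → ℤ) (x : Fin d → ℝ) :
    x ∈ zcube m ↔ ∀ i, m i = ⌈x i⌉ - 1 := by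
  refine forall_congr' fun i => ?_
  rw [Set.mem_Ioc, eq_sub_iff_add_eq, eq_comm, Int.ceil_eq_iff]
  push_cast
  simp

lemma zcube_disjoint {d : ℕ} : Pairwise (Function.onFun Disjoint (zcube (d := d))) := by
  intro m n hmn
  refine Set.disjoint_left.2 fun x hm hn => hmn ?_
  funext i
  rw [(mem_zcube_iff m x).1 hm i, (mem_zcube_iff n x).1 hn i]

lemma zcube_iUnion {d : ℕ} : (⋃ m, zcube (d := d) m) = Set.univ := by
  refine Set.eq_univ_of_forall fun x => Set.mem_iUnion.2 ⟨fun i => ⌈x i⌉ - 1, ?_⟩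
  rw [mem_zcube_iff]; intro i; rfl

lemma setIntegral_zcube {d : ℕ} (m : Fin d → ℤ) (h : (Fin d → ℝ) → ℂ) :
    ∫ x in zcube m, h x = ∫ x in zcube 0, h (x + zvec m) := by
  rw [← (measurePreserving_add_right (volume : Measure (Fin d → ℝ)) (zvec m)).setIntegral_preimage_emb
    (MeasurableEquiv.addRight (zvec m)).measurableEmbedding]
  congr 2
  ext x
  simp only [Set.mem_preimage, zcube, Set.mem_ofPred_eq, Set.mem_Ioc, Pi.add_apply, zvec, Pi.zero_apply]
  refine forall_congr' fun i => ?_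
  constructor <;> rintro ⟨h1, h2⟩ <;> constructor <;> push_cast at * <;> linarith

/-- Poisson summation for continuous functions vanishing outside a cube, under the assumption
that the Fourier side is summable. -/
theorem poisson_box {d : ℕ} (g : (Fin d → ℝ) → ℂ) (hg : Continuous g) (R : ℕ)
    (hR : ∀ x, (∃ j, (R : ℝ) < |x j|) → g x = 0)
    (hs : Summable fun n : Fin d → ℤ => ∫ x, chr n x * g x) :
    HasSum (fun n : Fin d → ℤ => ∫ x, chr n x * g x) (∑' m : Fin d → ℤ, g (zvec m)) := by
  classical
  set F : (Fin d → ℝ) → ℂ := fun x => ∑ᶠ m : Fin d → ℤ, g (x + zvec m) with hF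
  -- integer vectors whose translate meets the support of `g`, for `x` in a box of radius `K`
  have hfin : ∀ (K : ℕ) (x : Fin d → ℝ), (∀ j, |x j| ≤ K) → ∀ m : Fin d → ℤ,
      g (x + zvec m) ≠ 0 → m ∈ Finset.Icc (fun _ : Fin d => -((R : ℤ) + K)) (fun _ => (R : ℤ) + K) := by
    intro K x hx m hm
    have h1 : ∀ j, |x j + m j| ≤ R := by
      intro j
      by_contra hj
      exact hm (hR _ ⟨j, by simpa [zvec] using hj⟩)
    rw [Finset.mem_Icc, Pi.le_def, Pi.le_def]
    constructor <;> intro j <;> have a1 := abs_le.1 (h1 j) <;> have a2 := abs_le.1 (hx j)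
    · have : -((R : ℝ) + K) ≤ m j := by linarith [a1.1, a2.2]
      exact_mod_cast this
    · have : (m j : ℝ) ≤ (R : ℝ) + K := by linarith [a1.2, a2.1]
      exact_mod_cast this
  have hFper : ∀ x k, F (x + zvec k) = F x := by
    intro x k
    simp only [hF]
    refine Eq.trans (finsum_congr fun m => ?_)
      (finsum_comp_equiv (Equiv.addLeft k) (f := fun m => g (x + zvec m)))
    simp only [Equiv.coe_addLeft]
    congr 1
    funext i
    simp [zvec, add_assoc]
  have hFcont : Continuous F := by
    refine continuous_finsum (fun m => by fun_prop) ?_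
    intro x
    obtain ⟨K, hK⟩ := exists_nat_gt (‖x‖ + 1)
    refine ⟨Metric.ball x 1, Metric.ball_mem_nhds x one_pos, ?_⟩
    refine (Finset.finite_toSet (Finset.Icc (fun _ : Fin d => -((R : ℤ) + K))
      (fun _ => (R : ℤ) + K))).subset ?_
    rintro m ⟨y, hy1, hy2⟩
    refine hfin K y (fun j => ?_) m hy1
    have h1 : ‖y‖ ≤ ‖x‖ + 1 := by
      have := norm_le_norm_add_norm_sub' y x
      have h2 := mem_ball_iff_norm.1 hy2
      linarith
    have := norm_le_pi_norm y j
    rw [Real.norm_eq_abs] at this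
    linarith
  let mk : (Fin d → ℝ) → UnitAddTorus (Fin d) := Pi.map fun _ => (fun y : ℝ => (y : UnitAddCircle))
  have hq : IsOpenQuotientMap mk :=
    IsOpenQuotientMap.piMap fun _ => QuotientAddGroup.isOpenQuotientMap_mk
  have hmk : ∀ x y, mk x = mk y → F x = F y := by
    intro x y hxy
    have : ∀ i, ∃ k : ℤ, x i = y i + k := by
      intro i
      have h1 : ((x i : ℝ) : UnitAddCircle) = (y i : ℝ) := congrFun hxy i
      rw [← sub_eq_zero, ← AddCircle.coe_sub, AddCircle.coe_eq_zero_iff] at h1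
      obtain ⟨k, hk⟩ := h1
      refine ⟨k, ?_⟩
      simp at hk
      linarith
    choose k hk using this
    have : x = y + zvec k := funext hk
    rw [this, hFper]
  let Ft : UnitAddTorus (Fin d) → ℂ := fun t => F (Function.surjInv hq.surjective t)
  have hFt : ∀ x, Ft (mk x) = F x := fun x => hmk _ _ (Function.surjInv_eq hq.surjective _)
  have hFtc : Continuous Ft := by
    rw [← hq.continuous_comp_iff]
    exact hFcont.congr fun x => (hFt x).symm
  have hint : ∀ n, Integrable fun x => chr n x * g x := by
    intro n
    refine ((chr_continuous n).mul hg).integrable_of_hasCompactSupport ?_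
    refine HasCompactSupport.of_support_subset_isCompact (isCompact_closedBall (0 : Fin d → ℝ) R) ?_
    intro x hx
    rw [mem_closedBall_zero_iff, pi_norm_le_iff_of_nonneg (by positivity)]
    intro j
    by_contra hj
    exact hx (by simp [hR x ⟨j, by simpa using hj⟩])
  have hcoef : ∀ n, UnitAddTorus.mFourierCoeff Ft n = ∫ x, chr n x * g x := by
    intro n
    set S := Finset.Icc (fun _ : Fin d => -((R : ℤ) + (1 : ℕ))) (fun _ => (R : ℤ) + (1 : ℕ)) with hS
    have h01 : ∀ x ∈ zcube (0 : Fin d → ℤ), ∀ j, |x j| ≤ ((1 : ℕ) : ℝ) := by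
      intro x hx j
      have := hx j
      simp at this
      rw [abs_le]; constructor <;> push_cast <;> linarith
    rw [UnitAddTorus.mFourierCoeff_eq_integral Ft n 0]
    have e1 : {x : Fin d → ℝ | ∀ i, x i ∈ Set.Ioc ((0 : Fin d → ℝ) i) ((0 : Fin d → ℝ) i + 1)}
        = zcube 0 := by ext x; simp [zcube]
    rw [e1]
    have e2 : ∀ x ∈ zcube (0 : Fin d → ℤ), UnitAddTorus.mFourier (-n)
        (fun i => (x i : UnitAddCircle)) • Ft (fun i => (x i : UnitAddCircle))
        = ∑ m ∈ S, chr n (x + zvec m) * g (x + zvec m) := by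
      intro x hx
      rw [mFourier_neg_coe]
      have : Ft (fun i => (x i : UnitAddCircle)) = F x := hFt x
      rw [this, hF]
      simp only [smul_eq_mul]
      rw [finsum_eq_sum_of_support_subset (s := S) _ (fun m hm => by
        exact_mod_cast hfin 1 x (h01 x hx) m hm), Finset.mul_sum]
      exact Finset.sum_congr rfl fun m _ => by rw [chr_add]
    rw [setIntegral_congr_fun (zcube_measurable 0) e2, integral_finsetSum]
    · have e3 := hasSum_integral_iUnion (μ := volume) (f := fun x => chr n x * g x)
        (zcube_measurable (d := d)) zcube_disjoint (hint n).integrableOn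
      rw [zcube_iUnion, Measure.restrict_univ] at e3
      rw [← e3.tsum_eq, tsum_eq_sum (s := S)]
      · exact Finset.sum_congr rfl fun m _ =>
          (setIntegral_zcube m fun x => chr n x * g x).symm
      · intro m hm
        rw [setIntegral_zcube m fun x => chr n x * g x]
        refine setIntegral_eq_zero_of_forall_eq_zero fun x hx => ?_
        have : g (x + zvec m) = 0 := by
          by_contra h
          exact hm (hfin 1 x (h01 x hx) m h)
        rw [this, mul_zero]
    · intro m _
      exact ((hint n).comp_add_right (zvec m)).integrableOn
  have hsum : Summable (UnitAddTorus.mFourierCoeff Ft) := by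
    rw [show UnitAddTorus.mFourierCoeff Ft = _ from funext hcoef]; exact hs
  have := UnitAddTorus.hasSum_mFourier_series_apply_of_summable (f := ⟨Ft, hFtc⟩) hsum (mk 0)
  have hF0 : F 0 = ∑' m : Fin d → ℤ, g (zvec m) := by
    rw [hF, tsum_eq_finsum]
    · simp
    · refine (Finset.finite_toSet (Finset.Icc (fun _ : Fin d => -((R : ℤ) + (0 : ℕ)))
        (fun _ => (R : ℤ) + (0 : ℕ)))).subset fun m hm => ?_
      exact_mod_cast hfin 0 0 (by simp) m (by simpa using hm)
  rw [← hF0, ← hFt 0]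
  convert! this using 2 with n
  rw [← hcoef n]
  have h1 : UnitAddTorus.mFourier n (mk 0) = 1 := by
    have := mFourier_neg_coe (-n) (0 : Fin d → ℝ)
    rw [neg_neg] at this
    rw [show mk 0 = fun i => (((0 : Fin d → ℝ) i : ℝ) : UnitAddCircle) from rfl, this]
    simp [chr]
  rw [h1]
  simp

/-! ### The sum over the dual lattice -/

/-- There are at most `(k+1)^d` tuples of `d + 1` natural numbers with sum `k`: the first
entry is determined by the other `d`, which lie in `{0, …, k}`. -/
lemma card_tuples_le (d k : ℕ) (S : Finset (Fin (d + 1) → ℕ)) (hS : ∀ s ∈ S, ∑ j, s j = k) :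
    S.card ≤ (k + 1) ^ d := by
  classical
  have : S.card ≤ (Fintype.piFinset fun _ : Fin d => Finset.range (k + 1)).card := by
    refine Finset.card_le_card_of_injOn (fun s j => s j.succ) ?_ ?_
    · intro s hs
      simp only [Finset.mem_coe, Fintype.mem_piFinset, Finset.mem_range]
      intro j
      rw [← hS s hs]
      exact Nat.lt_succ_of_le (Finset.single_le_sum (f := s) (fun _ _ => Nat.zero_le _)
        (Finset.mem_univ j.succ))
    · intro s hs t ht hst
      have hst' : ∀ j : Fin d, s j.succ = t j.succ := fun j => congrFun hst j
      have h1 := hS s hs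
      have h2 := hS t ht
      rw [Fin.sum_univ_succ] at h1 h2
      simp_rw [hst'] at h1
      funext j
      refine Fin.cases ?_ hst' j
      omega
  simpa using this

/-- The least dyadic scale `2^s ≥ 1` that dominates `t`. -/
lemma exists_dyadic (t : ℝ) : ∃ s : ℕ, t ≤ 2 ^ s ∧ (s = 0 ∨ (2 : ℝ) ^ s ≤ 2 * t) := by
  classical
  have hex : ∃ s : ℕ, t ≤ 2 ^ s := (pow_unbounded_of_one_lt t one_lt_two).imp fun _ h => h.le
  refine ⟨Nat.find hex, Nat.find_spec hex, ?_⟩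
  rcases Nat.eq_zero_or_pos (Nat.find hex) with h | h
  · exact Or.inl h
  · right
    have := Nat.find_min hex (Nat.sub_lt h one_pos)
    rw [not_le] at this
    obtain ⟨m, hm⟩ := Nat.exists_eq_succ_of_ne_zero h.ne'
    rw [hm] at this ⊢
    simp at this
    rw [pow_succ]; linarith

lemma summable_poly_geom (e : ℕ) : Summable fun l : ℕ => ((l : ℝ) + 1) ^ e * (1 / 2) ^ l := by
  have h := (summable_nat_add_iff 1).2
    (summable_pow_mul_geometric_of_norm_lt_one (R := ℝ) e (r := 1 / 2) (by norm_num))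
  refine (h.mul_left 2).congr fun l => ?_
  push_cast; ring

/-- Constant in the lattice sum estimate: the factors come from replacing each term by its value
on a dyadic box, from the number of lattice points in such a box, and from summing over the
levels. -/
noncomputable def latC (d r : ℕ) : ℝ :=
  (2 ^ d) ^ r * ((2 ^ d + 1) * (2 ^ (d - 1) * ∑' l : ℕ, ((l : ℝ) + 1) ^ (d - 1) * (1 / 2) ^ l))

lemma latC_pos (d r : ℕ) : 0 < latC d r := by
  have : 0 < ∑' l : ℕ, ((l : ℝ) + 1) ^ (d - 1) * (1 / 2) ^ l :=
    (summable_poly_geom (d - 1)).tsum_pos (fun l => by positivity) 0 (by positivity)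
  unfold latC; positivity

/-- Estimate of a sum over `n` grouped by the level `κ n`: if `2^κ ≥ N` throughout and level `k`
holds at most `c (k+1)^e 2^k / N` elements, then `∑ (N/2^κ)²` is of order `(log₂ 2N)^e`. -/
lemma level_sum_le {ι : Type*} (T : Finset ι) (κ : ι → ℕ) (N c : ℝ) (e : ℕ) (hN : 1 ≤ N)
    (hc : 0 ≤ c) (hκ : ∀ n ∈ T, N ≤ 2 ^ κ n)
    (hcard : ∀ k : ℕ, ((T.filter fun n => κ n = k).card : ℝ) ≤ c * (k + 1) ^ e * (2 ^ k / N)) :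
    ∑ n ∈ T, (N / 2 ^ κ n) ^ 2 ≤
      c * (2 ^ e * ∑' l : ℕ, ((l : ℝ) + 1) ^ e * (1 / 2) ^ l) * Real.logb 2 (2 * N) ^ e := by
  classical
  have hN0 : 0 < N := by linarith
  set K : ℕ := ⌈Real.logb 2 N⌉₊ with hK
  set Λ := Real.logb 2 (2 * N) with hΛ
  have hlog : Λ = 1 + Real.logb 2 N := by
    rw [hΛ, Real.logb_mul (by norm_num) hN0.ne', Real.logb_self_eq_one (by norm_num)]
  have hlog0 : 0 ≤ Real.logb 2 N := Real.logb_nonneg (by norm_num) hN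
  have hK1 : (K : ℝ) + 1 ≤ 2 * Λ := by
    have := Nat.ceil_lt_add_one hlog0
    rw [hlog]; linarith
  have hNK : N ≤ 2 ^ K := by
    have := Nat.le_ceil (Real.logb 2 N)
    rw [Real.logb_le_iff_le_rpow (by norm_num) hN0, Real.rpow_natCast] at this
    exact this
  have hκK : ∀ n ∈ T, K ≤ κ n := by
    intro n hn
    refine Nat.ceil_le.2 ?_
    rw [Real.logb_le_iff_le_rpow (by norm_num) hN0, Real.rpow_natCast]
    exact hκ n hn
  set G : ℕ → ℝ := fun l => ((l : ℝ) + 1) ^ e * (1 / 2) ^ l with hG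
  have hGs : Summable G := summable_poly_geom e
  have hG0 : ∀ l, 0 ≤ G l := fun l => by positivity
  rw [← Finset.sum_fiberwise_of_maps_to (t := T.image κ) (g := κ)
    (fun n hn => Finset.mem_image_of_mem κ hn)]
  have step : ∀ k ∈ T.image κ, ∑ n ∈ T with κ n = k, (N / 2 ^ κ n) ^ 2
      ≤ c * (2 * Λ) ^ e * G (k - K) := by
    intro k hk
    obtain ⟨n, hn, rfl⟩ := Finset.mem_image.1 hk
    set k := κ n
    have hkK : K ≤ k := hκK n hn
    obtain ⟨l, hl⟩ := Nat.exists_eq_add_of_le hkK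
    have e1 : ∑ m ∈ T with κ m = k, (N / 2 ^ κ m) ^ 2
        = ((T.filter fun m => κ m = k).card : ℝ) * (N / 2 ^ k) ^ 2 := by
      rw [Finset.sum_congr rfl (g := fun _ => (N / 2 ^ k) ^ 2)
        (fun m hm => by rw [(Finset.mem_filter.1 hm).2]), Finset.sum_const, nsmul_eq_mul]
    rw [e1]
    calc _ ≤ c * (k + 1) ^ e * (2 ^ k / N) * (N / 2 ^ k) ^ 2 := by gcongr; exact hcard k
      _ = c * (k + 1) ^ e * (N / 2 ^ k) := by field_simp
      _ ≤ c * ((2 * Λ) * (l + 1)) ^ e * (1 / 2) ^ l := by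
        have a1 : (k : ℝ) + 1 ≤ (2 * Λ) * (l + 1) := by
          rw [hl]; push_cast
          have : (0 : ℝ) ≤ l := by positivity
          have : (0 : ℝ) ≤ K := by positivity
          nlinarith
        have a2 : N / 2 ^ k ≤ (1 / 2) ^ l := by
          rw [hl, pow_add, one_div, inv_pow, div_le_iff₀ (by positivity)]
          field_simp
          exact hNK
        have a3 : 0 ≤ 2 * Λ := le_trans (by positivity) hK1
        have a4 : 0 ≤ c * (2 * Λ * ((l : ℝ) + 1)) ^ e := by positivity
        gcongr
      _ = c * (2 * Λ) ^ e * G (k - K) := by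
        rw [hl, Nat.add_sub_cancel_left, mul_pow, hG]; ring
  refine (Finset.sum_le_sum step).trans ?_
  rw [← Finset.mul_sum]
  have e2 : ∑ k ∈ T.image κ, G (k - K) ≤ ∑' l, G l := by
    rw [← Finset.sum_image (s := T.image κ) (g := fun k => k - K) (f := G)]
    · exact hGs.sum_le_tsum _ fun l _ => hG0 l
    · intro k hk k' hk' h
      obtain ⟨n, hn, rfl⟩ := Finset.mem_image.1 (Finset.mem_coe.1 hk)
      obtain ⟨n', hn', rfl⟩ := Finset.mem_image.1 (Finset.mem_coe.1 hk')
      have := hκK n hn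
      have := hκK n' hn'
      simp only at h
      omega
  have hΛ0 : 0 ≤ Λ := by rw [hlog]; linarith
  calc _ ≤ c * (2 * Λ) ^ e * ∑' l, G l := by gcongr
    _ = _ := by rw [mul_pow]; ring

/-- Sum over nonzero points of a lattice with the Frolov properties: in the coordinates
`z_j = w_j Y_j`, dyadic boxes of volume below `N = ∏ w_j` hold no nonzero lattice points, the
others hold a number at most proportional to their volume over `N`. The hypothesis `hb` says
`b n ≤ (∏ min(w_j, 1/|Y_j|))^r`, phrased through upper bounds `q_j` of these minima so that no
division by `Y_j` occurs. -/
theorem lattice_sum_le (d r : ℕ) (hd : 1 ≤ d) (hr : 2 ≤ r) (Y : (Fin d → ℤ) → Fin d → ℝ)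
    (h1 : ∀ m : Fin d → ℤ, m ≠ 0 → 1 ≤ |∏ j, Y m j|)
    (h2 : ∀ x y : Fin d → ℝ, (∀ j, x j ≤ y j) →
      {m : Fin d → ℤ | ∀ j, Y m j ∈ Set.Icc (x j) (y j)}.Finite ∧
      ({m : Fin d → ℤ | ∀ j, Y m j ∈ Set.Icc (x j) (y j)}.ncard : ℝ) ≤ ∏ j, (y j - x j) + 1)
    (w : Fin d → ℝ) (hw : ∀ j, 0 < w j) (hN : 1 ≤ ∏ j, w j)
    (b : (Fin d → ℤ) → ℝ) (hb0 : ∀ n, 0 ≤ b n)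
    (hb : ∀ n, ∀ q : Fin d → ℝ, (∀ j, 0 ≤ q j) →
      (∀ j, w j ≤ q j ∨ 1 ≤ |Y n j| * q j) → b n ≤ (∏ j, q j) ^ r)
    (T : Finset (Fin d → ℤ)) (hT : ∀ n ∈ T, n ≠ 0) :
    ∑ n ∈ T, b n ≤ latC d r * Real.logb 2 (2 * ∏ j, w j) ^ (d - 1) := by
  classical
  set N := ∏ j, w j with hNdef
  have hN0 : 0 < N := by linarith
  choose σ hσ1 hσ2 using fun (n : Fin d → ℤ) (j : Fin d) => exists_dyadic (w j * |Y n j|)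
  set κ : (Fin d → ℤ) → ℕ := fun n => ∑ j, σ n j with hκdef
  have hY : ∀ n j, |Y n j| ≤ 2 ^ σ n j / w j := fun n j => by
    rw [le_div_iff₀ (hw j), mul_comm]; exact hσ1 n j
  have hκ : ∀ n ∈ T, N ≤ 2 ^ κ n := by
    intro n hn
    have a1 := h1 n (hT n hn)
    rw [Finset.abs_prod] at a1
    have a2 : ∏ j, |Y n j| ≤ ∏ j, (2 ^ σ n j / w j) :=
      Finset.prod_le_prod (fun j _ => abs_nonneg _) fun j _ => hY n j
    rw [Finset.prod_div_distrib, Finset.prod_pow_eq_pow_sum] at a2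
    have a3 := a1.trans a2
    rwa [le_div_iff₀ hN0, one_mul] at a3
  have hbn : ∀ n ∈ T, b n ≤ (2 ^ d) ^ r * (N / 2 ^ κ n) ^ 2 := by
    intro n hn
    have a1 := hb n (fun j => 2 * w j / 2 ^ σ n j) (fun j => by have := hw j; positivity) (by
      intro j
      have hwj := hw j
      rcases hσ2 n j with h | h
      · left; simp only [h, pow_zero, div_one]; linarith
      · right
        rw [← mul_div_assoc, one_le_div (by positivity)]
        linarith)
    rw [Finset.prod_div_distrib, Finset.prod_pow_eq_pow_sum, Finset.prod_mul_distrib,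
      Finset.prod_const, Finset.card_univ, Fintype.card_fin, mul_div_assoc, mul_pow] at a1
    refine a1.trans ?_
    exact mul_le_mul_of_nonneg_left (pow_le_pow_of_le_one (by positivity)
      ((div_le_one (by positivity)).2 (hκ n hn)) hr) (by positivity)
  have hcard : ∀ k : ℕ, ((T.filter fun n => κ n = k).card : ℝ)
      ≤ (2 ^ d + 1) * (k + 1) ^ (d - 1) * (2 ^ k / N) := by
    intro k
    set Tk := T.filter fun n => κ n = k with hTk
    rcases Tk.eq_empty_or_nonempty with he | ⟨n0, hn0⟩
    · rw [he]; simp; positivity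
    have hNk : N ≤ 2 ^ k := by
      have := Finset.mem_filter.1 hn0
      rw [← this.2]; exact hκ n0 this.1
    -- the number of points in a single dyadic box
    have hbox : ∀ s ∈ Tk.image σ, ((Tk.filter fun n => σ n = s).card : ℝ)
        ≤ (2 ^ d + 1) * (2 ^ k / N) := by
      intro s hs
      have hsk : ∑ j, s j = k := by
        obtain ⟨n, hn, rfl⟩ := Finset.mem_image.1 hs
        exact (Finset.mem_filter.1 hn).2
      obtain ⟨f1, f2⟩ := h2 (fun j => -(2 ^ s j / w j)) (fun j => 2 ^ s j / w j) (fun j => by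
        have := hw j
        have : 0 ≤ 2 ^ s j / w j := by positivity
        linarith)
      have f3 : (Tk.filter fun n => σ n = s).card ≤
          {m : Fin d → ℤ | ∀ j, Y m j ∈ Set.Icc (-(2 ^ s j / w j)) (2 ^ s j / w j)}.ncard := by
        rw [← Set.ncard_coe_finset]
        refine Set.ncard_le_ncard ?_ f1
        intro n hn j
        have hns := (Finset.mem_filter.1 (Finset.mem_coe.1 hn)).2
        rw [Set.mem_Icc, ← abs_le, ← hns]
        exact hY n j
      have f4 : ∏ j, (2 ^ s j / w j - -(2 ^ s j / w j)) = 2 ^ d * (2 ^ k / N) := by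
        simp_rw [sub_neg_eq_add, ← two_mul]
        rw [Finset.prod_mul_distrib, Finset.prod_div_distrib, Finset.prod_pow_eq_pow_sum, hsk]
        simp
        rfl
      rw [f4] at f2
      have f5 : 1 ≤ 2 ^ k / N := (one_le_div hN0).2 hNk
      calc _ ≤ _ := (Nat.cast_le (α := ℝ)).2 f3
        _ ≤ _ := f2
        _ ≤ _ := by linarith
    have himg : ((Tk.image σ).card : ℝ) ≤ (k + 1) ^ (d - 1) := by
      obtain ⟨d', rfl⟩ := Nat.exists_eq_add_of_le' hd
      have := card_tuples_le d' k (Tk.image σ) (fun s hs => by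
        obtain ⟨n, hn, rfl⟩ := Finset.mem_image.1 hs
        exact (Finset.mem_filter.1 hn).2)
      exact_mod_cast this
    rw [Finset.card_eq_sum_card_image σ Tk, Nat.cast_sum]
    refine (Finset.sum_le_sum hbox).trans ?_
    rw [Finset.sum_const, nsmul_eq_mul]
    calc _ ≤ (k + 1 : ℝ) ^ (d - 1) * ((2 ^ d + 1) * (2 ^ k / N)) := by gcongr
      _ = _ := by ring
  have hlev := level_sum_le T κ N (2 ^ d + 1) (d - 1) hN (by positivity) hκ hcard
  calc ∑ n ∈ T, b n ≤ ∑ n ∈ T, (2 ^ d) ^ r * (N / 2 ^ κ n) ^ 2 := Finset.sum_le_sum hbn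
    _ = (2 ^ d) ^ r * ∑ n ∈ T, (N / 2 ^ κ n) ^ 2 := by rw [Finset.mul_sum]
    _ ≤ _ := by
      refine (mul_le_mul_of_nonneg_left hlev (by positivity)).trans_eq ?_
      unfold latC; ring

/-! ### The cubature error -/

/-- The substitution `x = a Aᵀ z` turns the frequency `n` into the dual lattice point `a A n`. -/
lemma dot_mulVec_transpose {d : ℕ} (A : Matrix (Fin d) (Fin d) ℝ) (a : ℝ) (n : Fin d → ℤ)
    (z : Fin d → ℝ) :
    ∑ j, (n j : ℝ) * ((a • Aᵀ).mulVec z) j = ∑ j, a * A.mulVec (zvec n) j * z j := by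
  have : zvec n ⬝ᵥ (Aᵀ).mulVec z = A.mulVec (zvec n) ⬝ᵥ z := by
    rw [dotProduct_mulVec, vecMul_transpose]
  simp only [dotProduct, zvec] at this
  simp only [smul_mulVec, Pi.smul_apply, smul_eq_mul]
  have h1 : ∀ j, (n j : ℝ) * (a * Aᵀ.mulVec z j) = a * ((n j : ℝ) * Aᵀ.mulVec z j) := fun j => by ring
  have h2 : ∀ j, a * A.mulVec (zvec n) j * z j = a * (A.mulVec (zvec n) j * z j) := fun j => by ring
  simp_rw [h1, h2]
  rw [← Finset.mul_sum, ← Finset.mul_sum, this]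

lemma integral_eq_det_mul {d : ℕ} (M : Matrix (Fin d) (Fin d) ℝ) (hM : M.det ≠ 0)
    (G : (Fin d → ℝ) → ℂ) (hG : Continuous G) :
    ∫ x, G x = (|M.det| : ℝ) * ∫ z, G (M.mulVec z) := by
  have h1 := Real.map_matrix_volume_pi_eq_smul_volume_pi hM
  have h2 : ∫ x, G x ∂(Measure.map (Matrix.toLin' M) volume) = ∫ z, G (M.mulVec z) := by
    rw [integral_map]
    · rfl
    · exact (LinearMap.continuous_on_pi _).measurable.aemeasurable
    · exact hG.aestronglyMeasurable
  rw [h1, integral_smul_measure, ENNReal.toReal_ofReal (abs_nonneg _)] at h2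
  rw [← h2, abs_inv, Complex.real_smul, ← mul_assoc, ← Complex.ofReal_mul,
    mul_inv_cancel₀ (abs_ne_zero.2 hM)]
  simp

/-- A translation of the kernel multiplies its Fourier transform by a phase. -/
lemma integral_hker_shift (r : ℕ) (u k x0 : ℝ) :
    ‖∫ x : ℝ, Complex.exp (-(2 * Real.pi * Complex.I * k * x)) * (hker r u (x - x0) : ℂ)‖
      = ‖hft r u k‖ := by
  have h : ∀ x : ℝ, Complex.exp (-(2 * Real.pi * Complex.I * k * x)) * (hker r u (x - x0) : ℂ)
      = Complex.exp (-(2 * Real.pi * Complex.I * k * x0)) *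
        (fun y : ℝ => Complex.exp (-(2 * Real.pi * Complex.I * k * y)) * (hker r u y : ℂ))
          (x - x0) := by
    intro x
    simp only
    rw [← mul_assoc, ← Complex.exp_add]
    congr 2
    push_cast; ring
  simp_rw [h]
  rw [integral_const_mul, integral_sub_right_eq_self
    (fun y : ℝ => Complex.exp (-(2 * Real.pi * Complex.I * k * y)) * (hker r u y : ℂ)) x0,
    norm_mul, norm_char, one_mul, hft]

/-- Let `d ≥ 2`, let `A` satisfy the Frolov lattice properties (1°) and (2°), and let `r ≥ 2`.
There exist `c(d,A,r) > 0` and `C(d,A,r) > 0` such that for every `a > 1`, every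
`V ≥ V₀ := c(d,A,r) a^{-d}` and every box `B = ∏_j [x⁰_j - ru_j/2, x⁰_j + ru_j/2) ⊆ [0,1)^d`
with `vol(B) = V`, one has
`|Φ(a,A)(h^r_B) - ∫_{ℝ^d} h^r_B| ≤ C(d,A,r) a^{-rd} (log₂(2V/V₀))^{d-1}`. -/
theorem frolov_r_smooth_fixed_volume_discrepancy
    (d : ℕ) (hd : 2 ≤ d) (r : ℕ) (hr : 2 ≤ r) (A : Matrix (Fin d) (Fin d) ℝ)
    (hA : IsUnit A.det)
    (h1 : ∀ m : Fin d → ℤ, m ≠ 0 → 1 ≤ |∏ j, A.mulVec (fun i => (m i : ℝ)) j|)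
    (h2 : ∀ x y : Fin d → ℝ, (∀ j, x j ≤ y j) →
      {m : Fin d → ℤ | ∀ j, A.mulVec (fun i => (m i : ℝ)) j ∈ Set.Icc (x j) (y j)}.Finite ∧
      ({m : Fin d → ℤ | ∀ j, A.mulVec (fun i => (m i : ℝ)) j ∈ Set.Icc (x j) (y j)}.ncard : ℝ)
        ≤ ∏ j, (y j - x j) + 1) :
    ∃ c C : ℝ, 0 < c ∧ 0 < C ∧ ∀ a : ℝ, 1 < a → ∀ V : ℝ, c / a ^ d ≤ V →
      ∀ x0 u : Fin d → ℝ, (∀ j, 0 < u j) →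
      (∀ j, 0 ≤ x0 j - r * u j / 2) → (∀ j, x0 j + r * u j / 2 ≤ 1) →
      (∏ j, (r * u j)) = V →
      |(a ^ d * |A.det|)⁻¹ *
          (∑' m : Fin d → ℤ,
            ∏ j, hker r (u j) (a⁻¹ * (A⁻¹)ᵀ.mulVec (fun i => (m i : ℝ)) j - x0 j)) -
          ∫ x : Fin d → ℝ, ∏ j, hker r (u j) (x j - x0 j)| ≤
        C * (a ^ (r * d))⁻¹ * Real.logb 2 (2 * V / (c / a ^ d)) ^ (d - 1) := by
  classical
  have hr0 : (0 : ℝ) < r := by exact_mod_cast (by omega : 0 < r)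
  -- with `c = r^d` the ratio `V / V₀` is exactly `∏ (a u_j)`
  refine ⟨(r : ℝ) ^ d, latC d r, by positivity, latC_pos d r, ?_⟩
  intro a ha V hV x0 u hu hx0 hx1 hVu
  have ha0 : 0 < a := by linarith
  have hdet : A.det ≠ 0 := hA.ne_zero
  have hdet' : 0 < |A.det| := abs_pos.2 hdet
  set N : ℝ := ∏ j, a * u j with hNdef
  have hVN : V = r ^ d / a ^ d * N := by
    rw [← hVu, hNdef, Finset.prod_mul_distrib, Finset.prod_mul_distrib]
    simp only [Finset.prod_const, Finset.card_univ, Fintype.card_fin]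
    field_simp
  have hN : 1 ≤ N := by
    rw [hVN] at hV
    exact (le_mul_iff_one_le_right (by positivity)).1 hV
  have hlogarg : 2 * V / ((r : ℝ) ^ d / a ^ d) = 2 * N := by
    rw [hVN]; field_simp
  rw [hlogarg]
  set D : ℝ := a ^ d * |A.det| with hD
  have hD0 : 0 < D := by positivity
  obtain ⟨r', rfl⟩ := Nat.exists_eq_add_of_le' hr
  set r := r' + 2 with hrdef
  set g : (Fin d → ℝ) → ℂ := fun x =>
    ((∏ j, hker r (u j) (a⁻¹ * (A⁻¹)ᵀ.mulVec x j - x0 j) : ℝ) : ℂ) with hg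
  have hgc : Continuous g := by
    refine Complex.continuous_ofReal.comp (continuous_finsetProd _ fun j _ => ?_)
    refine (hker_continuous r' (u j) (hu j)).comp ?_
    have : Continuous fun x : Fin d → ℝ => (A⁻¹)ᵀ.mulVec x := continuous_const.matrix_mulVec continuous_id
    have := (continuous_apply j).comp this
    exact (continuous_const.mul this).sub continuous_const
  set M : Matrix (Fin d) (Fin d) ℝ := a • Aᵀ with hMdef
  have hMdet : |M.det| = D := by
    rw [hMdef, det_smul, det_transpose, abs_mul, Fintype.card_fin, abs_pow, abs_of_pos ha0]
  have hMdet0 : M.det ≠ 0 := abs_ne_zero.1 (by rw [hMdet]; exact hD0.ne')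
  have hinv : ∀ z, a⁻¹ • (A⁻¹)ᵀ.mulVec (M.mulVec z) = z := by
    intro z
    rw [hMdef, smul_mulVec, mulVec_smul, smul_smul, inv_mul_cancel₀ ha0.ne', one_smul,
      mulVec_mulVec, ← transpose_mul, mul_nonsing_inv _ hA, transpose_one, one_mulVec]
  have hinv' : ∀ x, M.mulVec (a⁻¹ • (A⁻¹)ᵀ.mulVec x) = x := by
    intro x
    rw [hMdef, smul_mulVec, mulVec_smul, smul_smul, mul_inv_cancel₀ ha0.ne', one_smul,
      mulVec_mulVec, ← transpose_mul, nonsing_inv_mul _ hA, transpose_one, one_mulVec]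
  have hgM : ∀ z, g (M.mulVec z) = ∏ j, (hker r (u j) (z j - x0 j) : ℂ) := by
    intro z
    rw [hg]
    push_cast
    refine Finset.prod_congr rfl fun j _ => ?_
    have := congrFun (hinv z) j
    rw [Pi.smul_apply, smul_eq_mul] at this
    rw [this]
  -- the support of `g` is the image of the box under `M`
  obtain ⟨R, hR⟩ := exists_nat_gt (∑ i, ∑ j, |M i j|)
  have hgR : ∀ x, (∃ j, (R : ℝ) < |x j|) → g x = 0 := by
    rintro x ⟨i, hi⟩
    set z := a⁻¹ • (A⁻¹)ᵀ.mulVec x with hz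
    rw [← hinv' x, ← hz, hgM]
    by_contra hne
    have hz1 : ∀ j, |z j| ≤ 1 := by
      intro j
      have h3 : ¬ ((r' + 1 + 1 : ℕ) * u j / 2 < |z j - x0 j|) := fun h =>
        Finset.prod_ne_zero_iff.1 hne j (Finset.mem_univ j) (by
          rw [hker_eq_zero (r' + 1) (u j) _ h]; simp)
      have h4 := abs_le.1 (not_lt.1 h3)
      have h5 := hx0 j
      have h6 := hx1 j
      rw [abs_le]
      constructor <;> linarith [h4.1, h4.2]
    have h7 : |x i| ≤ ∑ i, ∑ j, |M i j| := by
      have h8 : x i = ∑ j, M i j * z j := congrFun (hinv' x).symm i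
      rw [h8]
      refine (Finset.abs_sum_le_sum_abs _ _).trans ?_
      refine le_trans (Finset.sum_le_sum (g := fun j => |M i j|) fun j _ => ?_)
        (Finset.single_le_sum (f := fun i => ∑ j, |M i j|)
          (fun i _ => Finset.sum_nonneg fun j _ => abs_nonneg _) (Finset.mem_univ i))
      rw [abs_mul]
      exact mul_le_of_le_one_right (abs_nonneg _) (hz1 j)
    linarith
  -- Fourier coefficients of `g`: the substitution `x = M z` splits them into univariate integrals
  have hcoef : ∀ n : Fin d → ℤ, ∫ x, chr n x * g x = D * ∏ j,
      ∫ x : ℝ, Complex.exp (-(2 * Real.pi * Complex.I * ((a * A.mulVec (zvec n) j : ℝ) : ℂ) * x))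
        * (hker r (u j) (x - x0 j) : ℂ) := by
    intro n
    rw [integral_eq_det_mul M hMdet0 (fun x => chr n x * g x) ((chr_continuous n).mul hgc), hMdet]
    congr 1
    rw [← integral_fintype_prod_volume_eq_prod (fun j (x : ℝ) =>
      Complex.exp (-(2 * Real.pi * Complex.I * ((a * A.mulVec (zvec n) j : ℝ) : ℂ) * x))
        * (hker r (u j) (x - x0 j) : ℂ))]
    refine integral_congr_ae (Filter.Eventually.of_forall fun z => ?_)
    simp only
    rw [hgM, Finset.prod_mul_distrib, ← Complex.exp_sum, chr, dot_mulVec_transpose]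
    congr 2
    push_cast
    rw [Finset.mul_sum, ← Finset.sum_neg_distrib]
    exact Finset.sum_congr rfl fun j _ => by ring
  -- the `j`-th factor is at most `min(a u_j, 1 / |(A n)_j|)`, raised to the power `r`
  set b : (Fin d → ℤ) → ℝ := fun n =>
    (∏ j, a * ‖hft 1 (u j) (a * A.mulVec (zvec n) j)‖) ^ r with hbdef
  have hb0 : ∀ n, 0 ≤ b n := fun n => by positivity
  have hnorm : ∀ n, ‖∫ x, chr n x * g x‖ = D * (a ^ (r * d))⁻¹ * b n := by
    intro n
    rw [hcoef, norm_mul, norm_prod, Complex.norm_real, Real.norm_of_nonneg hD0.le]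
    simp_rw [integral_hker_shift]
    have : ∀ j, hft r (u j) (a * A.mulVec (zvec n) j)
        = hft 1 (u j) (a * A.mulVec (zvec n) j) ^ r := fun j => hft_eq_pow (r' + 1) _ _
    simp_rw [this, norm_pow]
    rw [hbdef]
    simp only
    rw [Finset.prod_mul_distrib, Finset.prod_const, Finset.card_univ, Fintype.card_fin,
      mul_pow, ← pow_mul, mul_comm d r, Finset.prod_pow, mul_assoc D, inv_mul_cancel_left₀ (by positivity)]
  have hbT : ∀ T : Finset (Fin d → ℤ), (∀ n ∈ T, n ≠ 0) →
      ∑ n ∈ T, b n ≤ latC d r * Real.logb 2 (2 * N) ^ (d - 1) := by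
    intro T hT
    refine lattice_sum_le d r (by omega) hr (fun n => A.mulVec (zvec n)) h1 h2 (fun j => a * u j)
      (fun j => mul_pos ha0 (hu j)) hN b hb0 ?_ T hT
    intro n q hq0 hq
    refine pow_le_pow_left₀ (by positivity) (Finset.prod_le_prod (fun j _ => by positivity)
      fun j _ => ?_) r
    obtain ⟨e1, e2⟩ := hft_one_le (u j) (a * A.mulVec (zvec n) j) (hu j)
    rcases hq j with h | h
    · exact (mul_le_mul_of_nonneg_left e1 ha0.le).trans h
    · rw [abs_mul, abs_of_pos ha0] at e2
      have h0 : 0 < |A.mulVec (zvec n) j| := by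
        rcases (abs_nonneg (A.mulVec (zvec n) j)).eq_or_lt with h0 | h0
        · rw [← h0] at h; norm_num at h
        · exact h0
      refine le_of_mul_le_mul_left ?_ h0
      linarith
  set B := latC d r * Real.logb 2 (2 * N) ^ (d - 1) with hB
  have hbs : Summable b := by
    refine summable_of_sum_le (c := b 0 + B) hb0 fun T => ?_
    have := hbT (T.erase 0) fun n hn => Finset.ne_of_mem_erase hn
    have h3 : ∑ n ∈ T, b n ≤ ∑ n ∈ insert 0 (T.erase 0), b n := by
      refine Finset.sum_le_sum_of_subset_of_nonneg (fun n hn => ?_) fun n _ _ => hb0 n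
      by_cases h : n = 0 <;> simp [h, hn]
    rw [Finset.sum_insert (Finset.notMem_erase 0 T)] at h3
    linarith
  have hs : Summable fun n : Fin d → ℤ => ∫ x, chr n x * g x := by
    refine Summable.of_norm ?_
    simp_rw [hnorm]
    exact hbs.mul_left _
  have hP := poisson_box g hgc R hgR hs
  set S := ∑' m : Fin d → ℤ, ∏ j, hker r (u j) (a⁻¹ * (A⁻¹)ᵀ.mulVec (fun i => (m i : ℝ)) j - x0 j)
    with hS
  have hSg : (∑' m : Fin d → ℤ, g (zvec m)) = (S : ℂ) := by
    rw [hS, Complex.ofReal_tsum]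
    rfl
  rw [hSg] at hP
  set I := ∫ x : Fin d → ℝ, ∏ j, hker r (u j) (x j - x0 j) with hI
  have hzero : ∫ x, chr (0 : Fin d → ℤ) x * g x = ((D * I : ℝ) : ℂ) := by
    rw [integral_eq_det_mul M hMdet0 (fun x => chr 0 x * g x) ((chr_continuous 0).mul hgc), hMdet, Complex.ofReal_mul D I, hI,
      ← integral_complex_ofReal]
    congr 2
    funext z
    rw [hgM]
    simp [chr]
  have hmain : ‖(S : ℂ) - ((D * I : ℝ) : ℂ)‖ ≤ D * (a ^ (r * d))⁻¹ * B := by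
    have ht : Filter.Tendsto (fun T : Finset (Fin d → ℤ) =>
        ‖∑ n ∈ T, (∫ x, chr n x * g x) - ((D * I : ℝ) : ℂ)‖) Filter.atTop
        (nhds ‖(S : ℂ) - ((D * I : ℝ) : ℂ)‖) := (Filter.Tendsto.sub_const hP _).norm
    refine le_of_tendsto ht ((Filter.eventually_ge_atTop {0}).mono fun T hT => ?_)
    have h0T : (0 : Fin d → ℤ) ∈ T := hT (Finset.mem_singleton_self 0)
    rw [← Finset.add_sum_erase T _ h0T, hzero, add_sub_cancel_left]
    refine (norm_sum_le _ _).trans ?_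
    simp_rw [hnorm]
    rw [← Finset.mul_sum]
    exact mul_le_mul_of_nonneg_left (hbT _ fun n hn => Finset.ne_of_mem_erase hn) (by positivity)
  rw [← Complex.ofReal_sub, Complex.norm_real, Real.norm_eq_abs] at hmain
  have hfac : D⁻¹ * S - I = D⁻¹ * (S - D * I) := by
    field_simp
  rw [hfac, abs_mul, abs_of_pos (inv_pos.2 hD0)]
  calc D⁻¹ * |S - D * I| ≤ D⁻¹ * (D * (a ^ (r * d))⁻¹ * B) := by gcongr
    _ = latC d r * (a ^ (r * d))⁻¹ * Real.logb 2 (2 * N) ^ (d - 1) := by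
      rw [hB]; field_simp
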